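/- arXiv:2506.18685 — 2 statements merged into one kernel-verified Lean document; each statement's English description precedes it below -/
import Mathlib

section
/- Let W be a nonempty finite set, f : W → ℝ a scoring function, and let ε > 0, Δ_f > 0, ω ≥ 0 and κ > 0 be real numbers. Set OPT = max_{s∈W} f(s) and W_{OPT_ω} = {s ∈ W : OPT − f(s) ≤ ω}. Let the Exponential Mechanism select each s ∈ W with probability exp(ε f(s)/(2Δ_f)) / Σ_{s'∈W} exp(ε f(s')/(2Δ_f)). Then the probability that the selected element s satisfies f(s) ≤ OPT − ω − (2Δ_f/ε)(ln(|W|/|W_{OPT_ω}|) + κ) is at most e^{−κ}; that is, Σ_{s∈W : f(s) ≤ OPT − ω − (2Δ_f/ε)(ln(|W|/|W_{OPT_ω}|)+κ)} exp(ε f(s)/(2Δ_f)) ≤ e^{−κ} · Σ_{s∈W} exp(ε f(s)/(2Δ_f)). -/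
/-!
Let `T = exp (ε (OPT - ω) / (2 Δf))` and let `G` be the set of candidates within `ω` of `OPT`.
The score threshold is chosen so that each rejected candidate has weight at most
`(|G| / |W|) * exp (-κ) * T`; there are at most `|W|` of them, so their total weight is at most
`exp (-κ) * (|G| * T)`. Each element of `G` has weight at least `T`, hence `|G| * T` is at most
the normalising sum.
-/

open Finset Real
open scoped Classical

/-- Utility guarantee of the Exponential Mechanism (generalised): the probability that the
selected element has score at most `OPT - ω - (2Δf/ε)(ln(|W|/|W_OPTω|) + κ)` is at most
`exp (-κ)`, expressed via the unnormalised exponential weights. -/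
theorem exponential_mechanism_utility
    {α : Type*} (W : Finset α) (hW : W.Nonempty)
    (f : α → ℝ) (ε Δf ω κ : ℝ) (hε : 0 < ε) (hΔ : 0 < Δf) (hω : 0 ≤ ω) (hκ : 0 < κ) :
    ∑ s ∈ W.filter (fun s =>
        f s ≤ W.sup' hW f - ω - (2 * Δf / ε) *
          (Real.log ((W.card : ℝ) /
            ((W.filter (fun s => W.sup' hW f - f s ≤ ω)).card : ℝ)) + κ)),
      Real.exp (ε * f s / (2 * Δf))
    ≤ Real.exp (-κ) * ∑ s ∈ W, Real.exp (ε * f s / (2 * Δf)) := by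
  set M := W.sup' hW f with hM
  set G := W.filter (fun s => M - f s ≤ ω) with hG
  have hGne : G.Nonempty := by
    obtain ⟨x, hx, hxM⟩ := Finset.exists_mem_eq_sup' hW f
    refine ⟨x, Finset.mem_filter.2 ⟨hx, ?_⟩⟩
    rw [hM, hxM, sub_self]
    exact hω
  have hg : (0 : ℝ) < G.card := by exact_mod_cast hGne.card_pos
  have hn : (0 : ℝ) < W.card := by exact_mod_cast hW.card_pos
  set T := Real.exp (ε * (M - ω) / (2 * Δf)) with hT
  set C := (G.card : ℝ) / W.card * Real.exp (-κ) * T with hC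
  have hC0 : 0 ≤ C := by positivity
  have hbad : ∀ s, f s ≤ M - ω - (2 * Δf / ε) * (Real.log ((W.card : ℝ) / G.card) + κ) →
      Real.exp (ε * f s / (2 * Δf)) ≤ C := by
    intro s hs
    have hCexp : C = Real.exp (ε * (M - ω - (2 * Δf / ε) *
        (Real.log ((W.card : ℝ) / G.card) + κ)) / (2 * Δf)) := by
      have he : ε * (M - ω - (2 * Δf / ε) * (Real.log ((W.card : ℝ) / G.card) + κ)) / (2 * Δf)
          = -Real.log ((W.card : ℝ) / G.card) + -κ + ε * (M - ω) / (2 * Δf) := by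
        field_simp
        ring
      rw [he, Real.exp_add, Real.exp_add, Real.exp_neg (Real.log _),
        Real.exp_log (div_pos hn hg), inv_div]
    rw [hCexp]
    gcongr
  have hgood : (G.card : ℝ) * T ≤ ∑ s ∈ W, Real.exp (ε * f s / (2 * Δf)) := by
    calc (G.card : ℝ) * T = ∑ _s ∈ G, T := by rw [Finset.sum_const, nsmul_eq_mul]
      _ ≤ ∑ s ∈ G, Real.exp (ε * f s / (2 * Δf)) := by
        refine Finset.sum_le_sum fun s hs => ?_
        have h : M - ω ≤ f s := by linarith [(Finset.mem_filter.1 hs).2]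
        rw [hT]
        gcongr
      _ ≤ ∑ s ∈ W, Real.exp (ε * f s / (2 * Δf)) :=
        Finset.sum_le_sum_of_subset_of_nonneg (Finset.filter_subset _ _)
          fun _ _ _ => (Real.exp_pos _).le
  refine (Finset.sum_le_sum fun s hs => hbad s (Finset.mem_filter.1 hs).2).trans ?_
  rw [Finset.sum_const, nsmul_eq_mul]
  calc _ ≤ (W.card : ℝ) * C := by
        gcongr
        exact Finset.filter_subset _ _
    _ = Real.exp (-κ) * (G.card * T) := by
        rw [hC]
        field_simp
    _ ≤ _ := by gcongr
end

section
/- Let W be a nonempty finite set partitioned into three pairwise disjoint subsets A, B, C with W = A ∪ B ∪ C, let c > 0 be a real number, and let f : W → ℝ and real parameters e_min, t_τ, t, α satisfy: α·e_min ≤ f(s) ≤ α + t_τ for all s ∈ A; f(s) ≥ α·e_min + t_τ for all s ∈ B; and f(s) ≥ α·e_min + t for all s ∈ C. Then 1 − Σ_{s∈A} exp(c·f(s)) / Σ_{s∈W} exp(c·f(s)) ≥ 1 − |A|·exp(c(α + t_τ)) / ( |A|·exp(c·α·e_min) + |B|·exp(c(α·e_min + t_τ)) + |C|·exp(c(α·e_min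 + t)) ). -/
/-!
Since `c > 0`, the map `x ↦ exp (c * x)` is increasing, so the bounds on `f` over `A`, `B`, `C`
bound each sum of exponentials by a cardinality times a constant: the upper bound on `A` controls
the numerator, the three lower bounds control the denominator. The quotient is monotone in the
numerator and antitone in the positive denominator, which gives the claim.
-/

open Finset Real

/-- Lower bound on the probability that DPM does not halt: with `A` the split candidates
violating the minimum cluster size, `B` those with centreness above `t_τ` but at most `t`,
and `C` the remaining (inner quantile) candidates, the probability of not selecting a
candidate from `A` under the Exponential Mechanism is at least the stated expression. -/
theorem lower_bound_dpm_does_not_halt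
    {σ : Type*} [DecidableEq σ] (A B C : Finset σ)
    (hAB : Disjoint A B) (hAC : Disjoint A C) (hBC : Disjoint B C)
    (hW : (A ∪ B ∪ C).Nonempty)
    (c : ℝ) (hc : 0 < c) (f : σ → ℝ) (emin tτ t α : ℝ)
    (hA : ∀ s ∈ A, α * emin ≤ f s ∧ f s ≤ α + tτ)
    (hB : ∀ s ∈ B, f s ≥ α * emin + tτ)
    (hC : ∀ s ∈ C, f s ≥ α * emin + t) :
    1 - (∑ s ∈ A, Real.exp (c * f s)) / (∑ s ∈ A ∪ B ∪ C, Real.exp (c * f s)) ≥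
      1 - (A.card : ℝ) * Real.exp (c * (α + tτ)) /
        ((A.card : ℝ) * Real.exp (c * (α * emin)) +
          (B.card : ℝ) * Real.exp (c * (α * emin + tτ)) +
          (C.card : ℝ) * Real.exp (c * (α * emin + t))) := by
  have hsum : ∑ s ∈ A ∪ B ∪ C, Real.exp (c * f s) =
      ∑ s ∈ A, Real.exp (c * f s) + ∑ s ∈ B, Real.exp (c * f s) +
        ∑ s ∈ C, Real.exp (c * f s) := by
    rw [Finset.sum_union (Finset.disjoint_union_left.2 ⟨hAC, hBC⟩), Finset.sum_union hAB]
  have lower (S : Finset σ) (m : ℝ) (h : ∀ s ∈ S, m ≤ f s) :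
      (S.card : ℝ) * Real.exp (c * m) ≤ ∑ s ∈ S, Real.exp (c * f s) := by
    rw [← nsmul_eq_mul]
    exact Finset.card_nsmul_le_sum _ _ _ fun s hs =>
      Real.exp_le_exp.2 (mul_le_mul_of_nonneg_left (h s hs) hc.le)
  have hnum : ∑ s ∈ A, Real.exp (c * f s) ≤ (A.card : ℝ) * Real.exp (c * (α + tτ)) := by
    rw [← nsmul_eq_mul]
    exact Finset.sum_le_card_nsmul _ _ _ fun s hs =>
      Real.exp_le_exp.2 (mul_le_mul_of_nonneg_left (hA s hs).2 hc.le)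
  have hden := add_le_add (add_le_add (lower A _ fun s hs => (hA s hs).1) (lower B _ hB))
    (lower C _ hC)
  -- Nonemptiness of the union keeps the right-hand denominator away from the value `x / 0 = 0`.
  have hpos : 0 < (A.card : ℝ) * Real.exp (c * (α * emin)) +
      (B.card : ℝ) * Real.exp (c * (α * emin + tτ)) +
      (C.card : ℝ) * Real.exp (c * (α * emin + t)) := by
    obtain ⟨s, hs⟩ := hW
    rcases Finset.mem_union.1 hs with h | h
    · rcases Finset.mem_union.1 h with h | h
      · have : 0 < (A.card : ℝ) := Nat.cast_pos.2 (Finset.card_pos.2 ⟨s, h⟩)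
        positivity
      · have : 0 < (B.card : ℝ) := Nat.cast_pos.2 (Finset.card_pos.2 ⟨s, h⟩)
        positivity
    · have : 0 < (C.card : ℝ) := Nat.cast_pos.2 (Finset.card_pos.2 ⟨s, h⟩)
      positivity
  rw [hsum]
  exact sub_le_sub_left (div_le_div₀ (by positivity) hnum hpos hden) 1
end
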